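/- arXiv:1208.5449 — 4 statements merged into one kernel-verified Lean document; each statement's English description precedes it below -/
import Mathlib

section
/- Let M be a compact metric space with metric d, μ a finite Borel measure on M, c > 1, γ ∈ (0,1], and let B = (ℕ → M) with D_c(x,y) = ∑_{k=0}^∞ d(x k, y k)/c^k. Suppose ψ, φ : B → ℝ are continuous and satisfy: |ψ(x)| ≤ K_ψ and |φ(x)| ≤ K_φ for all x, |ψ(x)−ψ(y)| ≤ H_ψ · D_c(x,y)^γ and |φ(x)−φ(y)| ≤ H_φ · D_c(x,y)^γ for all x, y. Then for all x, y ∈ B, |L_ψφ(x) − L_ψφ(y)| ≤ (μ(M) · e^{K_ψ} / c^γ) · (H_φ + K_φ · H_ψ) · D_c(x,y)^γ, where L_ψφ(x) = ∫_M e^{ψ(ax)} φ(ax) dμ(a). -/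
open MeasureTheory

/-- The sequence `ax = (a, x 0, x 1, …)`. -/
def seqCons {M : Type*} (a : M) (x : ℕ → M) : ℕ → M
  | 0 => a
  | n + 1 => x n

/-!
Prepending a common symbol contracts `D_c` by the factor `1 / c`, so every branch `x ↦ ax` divides
a `γ`-Hölder constant by `c ^ γ`. On each branch the integrand is compared through
`e ^ s p - e ^ t q = e ^ s (p - q) + (e ^ s - e ^ t) q`, where `exp` is `e ^ K`-Lipschitz below `K`.
-/

theorem abs_exp_sub_exp_le {s t K : ℝ} (hs : s ≤ K) (ht : t ≤ K) :
    |Real.exp s - Real.exp t| ≤ Real.exp K * |s - t| :=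
  (convex_Iic K).norm_image_sub_le_of_norm_deriv_le (fun _ _ ↦ Real.differentiableAt_exp)
    (fun u hu ↦ by simpa using hu) ht hs

section ExpWeights

variable {E : Type*} [NormedAddCommGroup E] [NormedSpace ℝ E]

theorem norm_exp_smul_sub_exp_smul_le {s t K L : ℝ} {p q : E} (hs : s ≤ K) (ht : t ≤ K)
    (hq : ‖q‖ ≤ L) :
    ‖Real.exp s • p - Real.exp t • q‖ ≤ Real.exp K * (‖p - q‖ + L * |s - t|) :=
  calc ‖Real.exp s • p - Real.exp t • q‖
      = ‖Real.exp s • (p - q) + (Real.exp s - Real.exp t) • q‖ := by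
        rw [smul_sub, sub_smul, sub_add_sub_cancel]
    _ ≤ Real.exp s * ‖p - q‖ + |Real.exp s - Real.exp t| * ‖q‖ := by
        simpa only [norm_smul, Real.norm_eq_abs, Real.abs_exp] using
          norm_add_le (Real.exp s • (p - q)) ((Real.exp s - Real.exp t) • q)
    _ ≤ Real.exp K * ‖p - q‖ + Real.exp K * |s - t| * L := by
        gcongr
        exact abs_exp_sub_exp_le hs ht
    _ = Real.exp K * (‖p - q‖ + L * |s - t|) := by ring

variable {Ω : Type*} [MeasurableSpace Ω] {μ : Measure Ω} {f g : Ω → ℝ} {p q : Ω → E} {K : ℝ}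

theorem integrable_exp_smul (hf : AEMeasurable f μ) (hfK : ∀ᵐ a ∂μ, f a ≤ K)
    (hp : Integrable p μ) : Integrable (fun a ↦ Real.exp (f a) • p a) μ :=
  hp.bdd_smul (Real.exp K) (Real.measurable_exp.comp_aemeasurable hf).aestronglyMeasurable <| by
    filter_upwards [hfK] with a ha
    simpa using ha

theorem norm_integral_exp_smul_sub_le [IsFiniteMeasure μ] {L δ ε : ℝ}
    (hf : AEMeasurable f μ) (hg : AEMeasurable g μ) (hp : Integrable p μ) (hq : Integrable q μ)
    (hfK : ∀ᵐ a ∂μ, f a ≤ K) (hgK : ∀ᵐ a ∂μ, g a ≤ K) (hqL : ∀ᵐ a ∂μ, ‖q a‖ ≤ L)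
    (hfg : ∀ᵐ a ∂μ, |f a - g a| ≤ δ) (hpq : ∀ᵐ a ∂μ, ‖p a - q a‖ ≤ ε) :
    ‖(∫ a, Real.exp (f a) • p a ∂μ) - ∫ a, Real.exp (g a) • q a ∂μ‖ ≤
      Real.exp K * (ε + L * δ) * μ.real Set.univ := by
  rw [← integral_sub (integrable_exp_smul hf hfK hp) (integrable_exp_smul hg hgK hq)]
  refine norm_integral_le_of_norm_le_const ?_
  filter_upwards [hfK, hgK, hqL, hfg, hpq] with a hfKa hgKa hqLa hfga hpqa
  have hL : 0 ≤ L := (norm_nonneg _).trans hqLa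
  exact (norm_exp_smul_sub_exp_smul_le hfKa hgKa hqLa).trans (by gcongr)

end ExpWeights

/-- The Ruelle operator `L_ψ` with a priori measure `μ`, applied to a vector-valued observable. -/
noncomputable def ruelleOperator {M E : Type*} [MeasurableSpace M] [NormedAddCommGroup E]
    [NormedSpace ℝ E] (μ : Measure M) (ψ : (ℕ → M) → ℝ) (φ : (ℕ → M) → E) (x : ℕ → M) : E :=
  ∫ a, Real.exp (ψ (seqCons a x)) • φ (seqCons a x) ∂μ

theorem measurable_seqCons_left {M : Type*} [MeasurableSpace M] (x : ℕ → M) :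
    Measurable (fun a ↦ seqCons a x) :=
  measurable_pi_iff.mpr fun
    | 0 => measurable_id
    | _ + 1 => measurable_const

section SeqDist

variable {M : Type*} [PseudoMetricSpace M] {c : ℝ} {x y : ℕ → M}

/-- The distance `D_c(x, y) = ∑ₖ d(x k, y k) / c ^ k` on sequences. It takes the junk value `0`
when the series diverges; see `SeqDistFinite`. -/
noncomputable def seqDist (c : ℝ) (x y : ℕ → M) : ℝ :=
  ∑' k : ℕ, dist (x k) (y k) / c ^ k

/-- Finiteness of `D_c(x, y)`, that is, convergence of the series defining `seqDist c x y`. -/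
def SeqDistFinite (c : ℝ) (x y : ℕ → M) : Prop :=
  Summable fun k : ℕ ↦ dist (x k) (y k) / c ^ k

theorem seqDistFinite_of_boundedSpace [BoundedSpace M] (hc : 1 < c) (x y : ℕ → M) :
    SeqDistFinite c x y := by
  have : 0 < c := zero_lt_one.trans hc
  have geometric : Summable fun k : ℕ ↦ Metric.diam (Set.univ : Set M) * c⁻¹ ^ k :=
    (summable_geometric_of_lt_one (by positivity) (inv_lt_one_of_one_lt₀ hc)).mul_left _
  refine geometric.of_nonneg_of_le (fun k ↦ by positivity) fun k ↦ ?_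
  rw [inv_pow, ← div_eq_mul_inv]
  gcongr
  exact Metric.dist_le_diam_of_mem BoundedSpace.bounded_univ (Set.mem_univ _) (Set.mem_univ _)

theorem seqDist_nonneg (hc : 0 ≤ c) (x y : ℕ → M) : 0 ≤ seqDist c x y :=
  tsum_nonneg fun _ ↦ by positivity

theorem dist_seqCons_succ_div (a : M) (k : ℕ) :
    dist (seqCons a x (k + 1)) (seqCons a y (k + 1)) / c ^ (k + 1) =
      dist (x k) (y k) / c ^ k / c := by
  rw [pow_succ, div_div, seqCons, seqCons]

theorem SeqDistFinite.cons (h : SeqDistFinite c x y) (a : M) :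
    SeqDistFinite c (seqCons a x) (seqCons a y) :=
  (summable_nat_add_iff 1).mp <| by simpa only [dist_seqCons_succ_div] using h.div_const c

theorem SeqDistFinite.seqDist_seqCons (h : SeqDistFinite c x y) (a : M) :
    seqDist c (seqCons a x) (seqCons a y) = seqDist c x y / c := by
  rw [seqDist, (h.cons a).tsum_eq_zero_add]
  simp only [dist_seqCons_succ_div, tsum_div_const]
  simp only [seqCons, dist_self, zero_div, zero_add, seqDist]

end SeqDist

section HolderEstimate

variable {M E : Type*} [PseudoMetricSpace M] [NormedAddCommGroup E] {c γ : ℝ}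

/-- `f` is `γ`-Hölder for `D_c` with constant `H`. Only pairs at finite distance are constrained,
so that the junk value of `seqDist` never enters. -/
def IsSeqHolder (c γ H : ℝ) (f : (ℕ → M) → E) : Prop :=
  ∀ ⦃x y : ℕ → M⦄, SeqDistFinite c x y → ‖f x - f y‖ ≤ H * seqDist c x y ^ γ

theorem IsSeqHolder.norm_seqCons_sub_le {H : ℝ} {f : (ℕ → M) → E} (hf : IsSeqHolder c γ H f)
    (hc : 0 ≤ c) {x y : ℕ → M} (hxy : SeqDistFinite c x y) (a : M) :
    ‖f (seqCons a x) - f (seqCons a y)‖ ≤ H * (seqDist c x y ^ γ / c ^ γ) := by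
  rw [← Real.div_rpow (seqDist_nonneg hc x y) hc, ← hxy.seqDist_seqCons a]
  exact hf (hxy.cons a)

theorem ruelle_operator_holder_estimate_general [MeasurableSpace M] [NormedSpace ℝ E]
    [CompleteSpace E] (μ : Measure M) [IsFiniteMeasure μ] (hc : 0 < c)
    {ψ : (ℕ → M) → ℝ} {φ : (ℕ → M) → E}
    (hψ : Measurable ψ) (hφ : StronglyMeasurable φ) {Kψ Kφ Hψ Hφ : ℝ}
    (hψK : ∀ x, ψ x ≤ Kψ) (hφK : ∀ x, ‖φ x‖ ≤ Kφ)
    (hψH : IsSeqHolder c γ Hψ ψ) (hφH : IsSeqHolder c γ Hφ φ) :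
    IsSeqHolder c γ (μ.real Set.univ * Real.exp Kψ / c ^ γ * (Hφ + Kφ * Hψ))
      (ruelleOperator μ ψ φ) := by
  intro x y hxy
  have measurable_branch (z : ℕ → M) : AEMeasurable (fun a ↦ ψ (seqCons a z)) μ :=
    (hψ.comp (measurable_seqCons_left z)).aemeasurable
  have integrable_branch (z : ℕ → M) : Integrable (fun a ↦ φ (seqCons a z)) μ :=
    .of_bound (hφ.comp_measurable (measurable_seqCons_left z)).aestronglyMeasurable Kφ
      (.of_forall fun _ ↦ hφK _)
  refine (norm_integral_exp_smul_sub_le (measurable_branch x) (measurable_branch y)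
    (integrable_branch x) (integrable_branch y) (.of_forall fun _ ↦ hψK _)
    (.of_forall fun _ ↦ hψK _) (.of_forall fun _ ↦ hφK _)
    (.of_forall <| hψH.norm_seqCons_sub_le hc.le hxy)
    (.of_forall <| hφH.norm_seqCons_sub_le hc.le hxy)).trans_eq ?_
  ring

end HolderEstimate

/-- Hölder estimate for the Ruelle operator: if `ψ, φ` are bounded by
`Kψ, Kφ` and `γ`-Hölder with constants `Hψ, Hφ` with respect to
`D_c(x,y) = ∑_k d(x k, y k)/c^k`, then
`|L_ψφ(x) − L_ψφ(y)| ≤ (μ(M) e^{Kψ}/c^γ)(Hφ + Kφ Hψ) D_c(x,y)^γ`. -/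
theorem ruelle_operator_holder_estimate
    {M : Type*} [MetricSpace M] [CompactSpace M] [MeasurableSpace M] [BorelSpace M]
    (μ : Measure M) [IsFiniteMeasure μ]
    (c γ : ℝ) (hc : 1 < c) (hγ0 : 0 < γ) (hγ1 : γ ≤ 1)
    (Dc : (ℕ → M) → (ℕ → M) → ℝ)
    (hDc : ∀ x y : ℕ → M, Dc x y = ∑' k : ℕ, dist (x k) (y k) / c ^ k)
    (ψ φ : (ℕ → M) → ℝ) (hψc : Continuous ψ) (hφc : Continuous φ)
    (Kψ Kφ Hψ Hφ : ℝ)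
    (hψb : ∀ x, |ψ x| ≤ Kψ) (hφb : ∀ x, |φ x| ≤ Kφ)
    (hψH : ∀ x y, |ψ x - ψ y| ≤ Hψ * Dc x y ^ γ)
    (hφH : ∀ x y, |φ x - φ y| ≤ Hφ * Dc x y ^ γ) :
    ∀ x y : ℕ → M,
      |(∫ a, Real.exp (ψ (seqCons a x)) * φ (seqCons a x) ∂μ) -
        ∫ a, Real.exp (ψ (seqCons a y)) * φ (seqCons a y) ∂μ| ≤
      ((μ Set.univ).toReal * Real.exp Kψ / c ^ γ) * (Hφ + Kφ * Hψ) * Dc x y ^ γ := by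
  obtain rfl : Dc = seqDist c := funext₂ hDc
  exact fun x y ↦ ruelle_operator_holder_estimate_general μ (zero_lt_one.trans hc) hψc.measurable
    hφc.stronglyMeasurable (fun z ↦ (le_abs_self _).trans (hψb z)) hφb (fun u v _ ↦ hψH u v)
    (fun u v _ ↦ hφH u v) (seqDistFinite_of_boundedSpace hc x y)
end

section
/- Let M be a compact metric space, μ a finite Borel measure on M, B = (ℕ → M) with the product topology, and C(B,ℝ) the Banach space of continuous real-valued functions on B with the supremum norm. Let Θ : C(B,ℝ) → (C(B,ℝ) →L C(B,ℝ)) be the map satisfying (Θ(ψ)φ)(x) = ∫_M e^{ψ(ax)} φ(ax) dμ(a) for all ψ, φ ∈ C(B,ℝ) and x ∈ B. Then for every ψ ∈ C(B,ℝ), Θ is Fréchet differentiable at ψ, and its Fréchet derivative is the continuous linear map sending β ∈ C(B,ℝ) to the operator φ ↦ Θ(ψ)(φ·β), i.e. (DΘ(ψ)(β)φ)(x) = ∫_M e^{ψ(ax)} φ(ax) β(ax) dμ(a). -/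
/-!
The Ruelle operators satisfy `Θ ψ φ = Θ 0 (e^ψ φ)`, where `e^ψ` is the exponential of `ψ`
in the Banach algebra `C(B,ℝ)`. So `Θ` is the exponential followed by the bounded linear map
`f ↦ (φ ↦ Θ 0 (f φ))`. Since `C(B,ℝ)` is commutative, the derivative of the exponential at `ψ` is
multiplication by `e^ψ`, and the chain rule gives `DΘ(ψ)(β) φ = Θ 0 (e^ψ β φ) = Θ ψ (β φ)`.
-/

open MeasureTheory

section NormedAlgebra

variable {𝕜 A F : Type*} [NontriviallyNormedField 𝕜] [NonUnitalSeminormedRing A]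
  [NormedSpace 𝕜 A] [IsScalarTower 𝕜 A A] [SMulCommClass 𝕜 A A] [SeminormedAddCommGroup F]
  [NormedSpace 𝕜 F]

/-- The operator-valued map `f ↦ (φ ↦ L (f * φ))` induced by a bounded operator `L` on a normed
algebra. It turns weights `f` into weighted operators, and is itself bounded and linear in `f`. -/
noncomputable def compMul (L : A →L[𝕜] F) : A →L[𝕜] A →L[𝕜] F :=
  ContinuousLinearMap.compL 𝕜 A A F L ∘L ContinuousLinearMap.mul 𝕜 A

theorem compMul_apply (L : A →L[𝕜] F) (f φ : A) : compMul L f φ = L (f * φ) :=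
  rfl

end NormedAlgebra

theorem hasFDerivAt_of_forall_eq_apply_zero_exp_mul {𝕜 A F : Type*} [RCLike 𝕜] [NormedCommRing A]
    [NormedAlgebra 𝕜 A] [CompleteSpace A] [NormedAddCommGroup F] [NormedSpace 𝕜 F]
    {Θ : A → A →L[𝕜] F} (hΘ : ∀ ψ φ, Θ ψ φ = Θ 0 (NormedSpace.exp ψ * φ)) (ψ : A) :
    HasFDerivAt Θ (compMul (Θ ψ)) ψ := by
  have hΘ_comp : Θ = compMul (Θ 0) ∘ NormedSpace.exp :=
    funext fun ψ' ↦ ContinuousLinearMap.ext (hΘ ψ')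
  have hderiv : compMul (Θ ψ) = compMul (Θ 0) ∘L (NormedSpace.exp ψ • (1 : A →L[𝕜] A)) := by
    ext β φ
    calc Θ ψ (β * φ) = Θ 0 (NormedSpace.exp ψ * (β * φ)) := hΘ ψ (β * φ)
      _ = Θ 0 (NormedSpace.exp ψ * β * φ) := by rw [mul_assoc]
  have hcomp : HasFDerivAt (compMul (Θ 0) ∘ NormedSpace.exp)
      (compMul (Θ 0) ∘L (NormedSpace.exp ψ • (1 : A →L[𝕜] A))) ψ :=
    (compMul (Θ 0)).hasFDerivAt.comp ψ hasFDerivAt_exp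
  rwa [← hΘ_comp, ← hderiv] at hcomp

theorem exp_continuousMap_apply {X R : Type*} [TopologicalSpace X] [CompactSpace X]
    [NormedRing R] [NormedAlgebra ℚ R] [CompleteSpace R] (f : C(X, R)) (x : X) :
    NormedSpace.exp f x = NormedSpace.exp (f x) :=
  NormedSpace.map_exp ((Pi.evalRingHom (fun _ ↦ R) x).comp ContinuousMap.coeFnRingHom)
    (continuous_eval_const x) f

theorem ruelle_operator_eq_apply_zero_exp_mul {M : Type*} [TopologicalSpace M] [CompactSpace M]
    [MeasurableSpace M] {μ : Measure M} {Θ : C(ℕ → M, ℝ) → C(ℕ → M, ℝ) →L[ℝ] C(ℕ → M, ℝ)}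
    (hΘ : ∀ ψ φ : C(ℕ → M, ℝ), ∀ x : ℕ → M,
      Θ ψ φ x = ∫ a, Real.exp (ψ (seqCons a x)) * φ (seqCons a x) ∂μ)
    (ψ φ : C(ℕ → M, ℝ)) :
    Θ ψ φ = Θ 0 (NormedSpace.exp ψ * φ) := by
  ext x
  simp only [hΘ, ContinuousMap.mul_apply, ContinuousMap.zero_apply, exp_continuousMap_apply,
    ← Real.exp_eq_exp_ℝ, Real.exp_zero, one_mul]

theorem ruelle_operator_frechet_differentiable_general
    {M : Type*} [TopologicalSpace M] [CompactSpace M] [MeasurableSpace M] [OpensMeasurableSpace M]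
    (μ : Measure M) [IsFiniteMeasure μ]
    (Θ : C(ℕ → M, ℝ) → C(ℕ → M, ℝ) →L[ℝ] C(ℕ → M, ℝ))
    (hΘ : ∀ ψ φ : C(ℕ → M, ℝ), ∀ x : ℕ → M,
      Θ ψ φ x = ∫ a, Real.exp (ψ (seqCons a x)) * φ (seqCons a x) ∂μ)
    (ψ : C(ℕ → M, ℝ)) :
    ∃ D : C(ℕ → M, ℝ) →L[ℝ] C(ℕ → M, ℝ) →L[ℝ] C(ℕ → M, ℝ),
      HasFDerivAt Θ D ψ ∧
      ∀ β φ : C(ℕ → M, ℝ), ∀ x : ℕ → M,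
        D β φ x = ∫ a, Real.exp (ψ (seqCons a x)) * φ (seqCons a x) * β (seqCons a x) ∂μ := by
  refine ⟨compMul (Θ ψ), hasFDerivAt_of_forall_eq_apply_zero_exp_mul
    (ruelle_operator_eq_apply_zero_exp_mul hΘ) ψ, fun β φ x ↦ ?_⟩
  rw [compMul_apply, mul_comm β φ, hΘ]
  simp only [ContinuousMap.mul_apply, mul_assoc]

/-- The map `Θ` sending `ψ ∈ C(B,ℝ)` to the Ruelle operator `L_ψ` is
Fréchet differentiable at every `ψ`, with derivative
`β ↦ (φ ↦ L_ψ(φ·β))`, i.e. `(DΘ(ψ)(β)φ)(x) = ∫ e^{ψ(ax)} φ(ax) β(ax) dμ(a)`. -/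
theorem ruelle_operator_frechet_differentiable
    {M : Type*} [MetricSpace M] [CompactSpace M] [MeasurableSpace M] [BorelSpace M]
    (μ : Measure M) [IsFiniteMeasure μ]
    (Θ : C(ℕ → M, ℝ) → C(ℕ → M, ℝ) →L[ℝ] C(ℕ → M, ℝ))
    (hΘ : ∀ ψ φ : C(ℕ → M, ℝ), ∀ x : ℕ → M,
      Θ ψ φ x = ∫ a, Real.exp (ψ (seqCons a x)) * φ (seqCons a x) ∂μ)
    (ψ : C(ℕ → M, ℝ)) :
    ∃ D : C(ℕ → M, ℝ) →L[ℝ] C(ℕ → M, ℝ) →L[ℝ] C(ℕ → M, ℝ),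
      HasFDerivAt Θ D ψ ∧
      ∀ β φ : C(ℕ → M, ℝ), ∀ x : ℕ → M,
        D β φ x = ∫ a, Real.exp (ψ (seqCons a x)) * φ (seqCons a x) * β (seqCons a x) ∂μ :=
  ruelle_operator_frechet_differentiable_general μ Θ hΘ ψ
end

section
/- Let M be a compact metric space, μ a finite Borel measure on M, B = (ℕ → M) with the product topology, and C(B,ℝ) the Banach space of continuous real-valued functions on B with the supremum norm. Let V denote the Banach space of bounded linear operators on C(B,ℝ) with the operator norm, and let Θ : C(B,ℝ) → V be the map satisfying (Θ(ψ)φ)(x) = ∫_M e^{ψ(ax)} φ(ax) dμ(a) for all ψ, φ ∈ C(B,ℝ) and x ∈ B. Then Θ is (real-)analytic on all of C(B,ℝ): at every ψ ∈ C(B,ℝ), Θ is given in a neighborhood of ψ by its convergent Taylor series Θ(ψ+β) = Θ(ψ) + ∑_{n=1}^∞ (1/n!)·[φ ↦ Θ(ψ)(φ·βⁿ)]. -/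
open MeasureTheory

/-!
Only two facts about `Θ` matter: `Θ ψ φ = Θ 0 (e^ψ φ)`, and the pointwise exponential `e^ψ` is the
exponential of the commutative Banach algebra `C(B, ℝ)`. So `Θ` is the entire function `exp`
followed by the bounded linear map sending `f` to the operator `φ ↦ Θ 0 (φ f)`, and its Taylor
series at `ψ` is the image of `e^(ψ + β) - e^ψ = ∑_{n ≥ 1} e^ψ βⁿ / n!` under that map.
-/

section BanachAlgebra

variable {𝕜 A F : Type*} [NontriviallyNormedField 𝕜]

/-- The operator `φ ↦ S (φ * f)`, obtained from `S` by inserting the weight `f`, as a continuous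
linear function of `f`. -/
noncomputable def weightedOperator [NormedRing A] [NormedAlgebra 𝕜 A]
    [NormedAddCommGroup F] [NormedSpace 𝕜 F] (S : A →L[𝕜] F) : A →L[𝕜] A →L[𝕜] F :=
  (ContinuousLinearMap.compL 𝕜 A A F S).comp (ContinuousLinearMap.mul 𝕜 A).flip

@[simp]
lemma weightedOperator_apply [NormedRing A] [NormedAlgebra 𝕜 A]
    [NormedAddCommGroup F] [NormedSpace 𝕜 F] (S : A →L[𝕜] F) (f φ : A) :
    weightedOperator S f φ = S (φ * f) :=
  rfl

variable [CharZero 𝕜] [ContinuousSMul ℚ 𝕜]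

variable (𝕜) in
lemma hasSum_inv_factorial_smul_pow_succ [NormedRing A] [NormedAlgebra 𝕜 A] [CompleteSpace A]
    (b : A) :
    HasSum (fun n : ℕ => ((n + 1).factorial : 𝕜)⁻¹ • b ^ (n + 1)) (NormedSpace.exp b - 1) := by
  simpa using (hasSum_nat_add_iff' 1).2 (NormedSpace.exp_series_hasSum_exp' (𝕂 := 𝕜) b)

variable [NormedCommRing A] [NormedAlgebra 𝕜 A] [CompleteSpace A]

variable (𝕜) in
lemma hasSum_exp_add_sub_exp (a b : A) :
    HasSum (fun n : ℕ => ((n + 1).factorial : 𝕜)⁻¹ • (NormedSpace.exp a * b ^ (n + 1)))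
      (NormedSpace.exp (a + b) - NormedSpace.exp a) := by
  have mem_ball (x : A) : x ∈ Metric.eball (0 : A) (NormedSpace.expSeries 𝕜 A).radius := by
    simp [NormedSpace.expSeries_radius_eq_top]
  have exp_add : NormedSpace.exp (a + b) = NormedSpace.exp a * NormedSpace.exp b :=
    NormedSpace.exp_add_of_mem_ball (mem_ball a) (mem_ball b)
  simpa only [mul_smul_comm, mul_sub, mul_one, exp_add]
    using (hasSum_inv_factorial_smul_pow_succ 𝕜 b).mul_left (NormedSpace.exp a)

theorem ruelle_operator_analytic_general [NormedAddCommGroup F] [NormedSpace 𝕜 F]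
    (S : A →L[𝕜] F) (Θ : A → A →L[𝕜] F) (hΘ : ∀ ψ φ, Θ ψ φ = S (NormedSpace.exp ψ * φ)) :
    (∀ ψ, AnalyticAt 𝕜 Θ ψ) ∧
    ∀ ψ β, HasSum (fun n : ℕ => ((n + 1).factorial : 𝕜)⁻¹ •
        (Θ ψ).comp ((ContinuousLinearMap.mul 𝕜 A).flip (β ^ (n + 1)))) (Θ (ψ + β) - Θ ψ) := by
  obtain rfl : Θ = fun ψ => weightedOperator S (NormedSpace.exp ψ) := by
    ext ψ φ
    rw [hΘ, weightedOperator_apply, mul_comm]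
  refine ⟨fun ψ => ?_, fun ψ β => ?_⟩
  · exact ((weightedOperator S).analyticAt _).comp (NormedSpace.exp_analytic ψ)
  · have comp_mul (n : ℕ) :
        (weightedOperator S (NormedSpace.exp ψ)).comp
            ((ContinuousLinearMap.mul 𝕜 A).flip (β ^ n)) =
          weightedOperator S (NormedSpace.exp ψ * β ^ n) := by
      ext φ
      simp [mul_assoc, mul_comm (β ^ n)]
    simpa only [comp_mul, map_smul, map_sub]
      using (weightedOperator S).hasSum (hasSum_exp_add_sub_exp 𝕜 ψ β)

end BanachAlgebra

/-- The map `Θ : C(B,ℝ) → V`, `ψ ↦ L_ψ`, is real-analytic on all of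
`C(B,ℝ)`: it is analytic at every `ψ`, and around every `ψ` it is given by its
convergent Taylor series `Θ(ψ+β) = Θ(ψ) + ∑_{n=1}^∞ (1/n!)·[φ ↦ Θ(ψ)(φ·βⁿ)]`. -/
theorem ruelle_operator_analytic
    {M : Type*} [MetricSpace M] [CompactSpace M] [MeasurableSpace M] [BorelSpace M]
    (μ : Measure M) [IsFiniteMeasure μ]
    (Θ : C(ℕ → M, ℝ) → C(ℕ → M, ℝ) →L[ℝ] C(ℕ → M, ℝ))
    (hΘ : ∀ ψ φ : C(ℕ → M, ℝ), ∀ x : ℕ → M,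
      Θ ψ φ x = ∫ a, Real.exp (ψ (seqCons a x)) * φ (seqCons a x) ∂μ) :
    (∀ ψ : C(ℕ → M, ℝ), AnalyticAt ℝ Θ ψ) ∧
    ∀ ψ β : C(ℕ → M, ℝ),
      HasSum (fun n : ℕ => ((n + 1).factorial : ℝ)⁻¹ •
          ((Θ ψ).comp ((ContinuousLinearMap.mul ℝ (C(ℕ → M, ℝ))).flip (β ^ (n + 1)))))
        (Θ (ψ + β) - Θ ψ) :=
  ruelle_operator_analytic_general (Θ 0) Θ fun ψ φ => by
    ext x
    simp [hΘ, NormedSpace.exp_continuousMap_eq, Real.exp_eq_exp_ℝ]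
end

section
/- Let M be a compact metric space, μ a finite Borel measure on M, A : M × M → ℝ continuous, I ⊆ ℝ closed, with A sectionally trivial on I (the map m ↦ s(m) = {a ∈ M : A(a,m) ∈ I} is locally constant on M). Let C(B(A,I),ℝ) be the Banach space of continuous real-valued functions on the compact space B(A,I) with the supremum norm, let V̇ be the Banach space of bounded linear operators on C(B(A,I),ℝ) with the operator norm, and let Θ̇ : C(B(A,I),ℝ) → V̇ be the map satisfying (Θ̇(ψ)φ)(x) = ∫_{s(x 0)} e^{ψ(ax)} φ(ax) dμ(a) for all ψ, φ ∈ C(B(A,I),ℝ) and x ∈ B(A,I). Then Θ̇ is (real-)analytic on all of C(B(A,I),ℝ): at every ψ it is given in a neighborhood of ψ by its convergent Taylor series Θ̇(ψ+β) = Θ̇(ψ) + ∑_{n=1}^∞ (1/n!)·[φ ↦ Θ̇(ψ)(φ·βⁿ)]. -/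
open MeasureTheory
open scoped Classical

/-- For `x ∈ B(A,I)` and `a ∈ s(x 0)`, the sequence `ax` as an element of `B(A,I)`. -/
def consMem {M : Type*} (A : M × M → ℝ) (I : Set ℝ)
    (x : {z : ℕ → M // ∀ k : ℕ, A (z k, z (k + 1)) ∈ I}) (a : M)
    (ha : A (a, x.1 0) ∈ I) : {z : ℕ → M // ∀ k : ℕ, A (z k, z (k + 1)) ∈ I} :=
  ⟨seqCons a x.1, by
    intro k
    cases k with
    | zero => exact ha
    | succ n => exact x.2 n⟩

/-!
On the commutative Banach algebra `C(B(A,I),ℝ)` the pointwise exponential is the algebra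
exponential. Because `e^{ψ + β} = e^ψ e^β` under the integral, `Θ(ψ + β)` is multiplication by
`exp β` followed by `Θ ψ`; in particular `Θ ψ` depends on `ψ` only through `exp ψ`, and does so by
a bounded linear map. Analyticity of `Θ` and its Taylor series are therefore those of the
exponential.
-/

section BanachAlgebra

variable {𝕜 𝔸 E : Type*} [NontriviallyNormedField 𝕜] [NormedRing 𝔸] [NormedAlgebra 𝕜 𝔸]
  [NormedAddCommGroup E] [NormedSpace 𝕜 E]

/-- The operator `f ↦ T (f * g)`, as a bounded linear function of `g`: it expresses the dependence
of a weighted operator on its weight `g`. -/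
noncomputable def compMulRight (T : 𝔸 →L[𝕜] E) : 𝔸 →L[𝕜] 𝔸 →L[𝕜] E :=
  (ContinuousLinearMap.compL 𝕜 𝔸 𝔸 E T).comp (ContinuousLinearMap.mul 𝕜 𝔸).flip

theorem compMulRight_apply (T : 𝔸 →L[𝕜] E) (g : 𝔸) :
    compMulRight T g = T.comp ((ContinuousLinearMap.mul 𝕜 𝔸).flip g) :=
  rfl

theorem compMulRight_one (T : 𝔸 →L[𝕜] E) : compMulRight T 1 = T := by
  ext f
  simp [compMulRight_apply]

variable [CharZero 𝕜] [ContinuousSMul ℚ 𝕜] [CompleteSpace 𝔸]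

theorem analyticAt_compMulRight_exp (T : 𝔸 →L[𝕜] E) (ψ : 𝔸) :
    AnalyticAt 𝕜 (fun ψ' => compMulRight T (NormedSpace.exp ψ')) ψ :=
  ((compMulRight T).analyticAt _).comp (NormedSpace.exp_analytic ψ)

theorem hasSum_compMulRight_exp_sub (T : 𝔸 →L[𝕜] E) (β : 𝔸) :
    HasSum (fun n : ℕ => ((n + 1).factorial : 𝕜)⁻¹ • compMulRight T (β ^ (n + 1)))
      (compMulRight T (NormedSpace.exp β) - T) := by
  have hexp : HasSum (fun n : ℕ => (n.factorial : 𝕜)⁻¹ • compMulRight T (β ^ n))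
      (compMulRight T (NormedSpace.exp β)) := by
    simpa only [map_smul] using
      (compMulRight T).hasSum (NormedSpace.exp_series_hasSum_exp' (𝕂 := 𝕜) β)
  simpa [compMulRight_one] using (hasSum_nat_add_iff' 1).mpr hexp

end BanachAlgebra

/-- The space `B(A,I)` of sequences in `M` all of whose transitions are allowed by `A` and `I`. -/
abbrev AdmissibleSeq {M : Type*} (A : M × M → ℝ) (I : Set ℝ) : Type _ :=
  {z : ℕ → M // ∀ k : ℕ, A (z k, z (k + 1)) ∈ I}

section Ruelle

variable {M : Type*} [TopologicalSpace M] [MeasurableSpace M] {μ : Measure M}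
  {A : M × M → ℝ} {I : Set ℝ} [CompactSpace (AdmissibleSeq A I)]
  {Θ : C(AdmissibleSeq A I, ℝ) → C(AdmissibleSeq A I, ℝ) →L[ℝ] C(AdmissibleSeq A I, ℝ)}

variable (μ Θ) in
/-- `Θ ψ` is the generalized Ruelle operator `L_ψ`, for every potential `ψ`. This is a predicate, as
the Ruelle integral of a continuous function need not be continuous for arbitrary `A` and `I`. -/
def IsRuelleOperatorMap : Prop :=
  ∀ ψ φ : C(AdmissibleSeq A I, ℝ), ∀ x : AdmissibleSeq A I,
    Θ ψ φ x = ∫ a in {a : M | A (a, x.1 0) ∈ I},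
      (if ha : A (a, x.1 0) ∈ I then
        Real.exp (ψ (consMem A I x a ha)) * φ (consMem A I x a ha) else 0) ∂μ

theorem IsRuelleOperatorMap.map_add_eq_compMulRight_exp (hΘ : IsRuelleOperatorMap μ Θ)
    (hs : ∀ m : M, MeasurableSet {a : M | A (a, m) ∈ I}) (ψ β : C(AdmissibleSeq A I, ℝ)) :
    Θ (ψ + β) = compMulRight (Θ ψ) (NormedSpace.exp β) := by
  ext φ x
  change Θ (ψ + β) φ x = Θ ψ (φ * NormedSpace.exp β) x
  rw [hΘ, hΘ]
  refine setIntegral_congr_fun (hs (x.1 0)) fun a (ha : A (a, x.1 0) ∈ I) => ?_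
  simp only [dif_pos ha, NormedSpace.exp_continuousMap_eq, ContinuousMap.add_apply,
    ContinuousMap.mul_apply, ContinuousMap.coe_mk, Function.comp_apply, ← Real.exp_eq_exp_ℝ,
    Real.exp_add]
  ring

theorem generalized_ruelle_operator_analytic_general [OpensMeasurableSpace M] [IsFiniteMeasure μ]
    (hs : ∀ m : M, MeasurableSet {a : M | A (a, m) ∈ I}) (hΘ : IsRuelleOperatorMap μ Θ) :
    (∀ ψ : C(AdmissibleSeq A I, ℝ), AnalyticAt ℝ Θ ψ) ∧
    ∀ ψ β : C(AdmissibleSeq A I, ℝ),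
      HasSum (fun n : ℕ => ((n + 1).factorial : ℝ)⁻¹ •
          (Θ ψ).comp ((ContinuousLinearMap.mul ℝ C(AdmissibleSeq A I, ℝ)).flip (β ^ (n + 1))))
        (Θ (ψ + β) - Θ ψ) := by
  have hadd := hΘ.map_add_eq_compMulRight_exp hs
  have hΘ_exp : Θ = fun ψ => compMulRight (Θ 0) (NormedSpace.exp ψ) :=
    funext fun ψ => by simpa only [zero_add] using hadd 0 ψ
  refine ⟨fun ψ => ?_, fun ψ β => ?_⟩
  · rw [hΘ_exp]
    exact analyticAt_compMulRight_exp (Θ 0) ψ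
  · simpa only [hadd, compMulRight_apply] using hasSum_compMulRight_exp_sub (Θ ψ) β

end Ruelle

/-- The map `Θ̇` sending `ψ ∈ C(B(A,I),ℝ)` to the generalized Ruelle
operator `(L_ψφ)(x) = ∫_{s(x 0)} e^{ψ(ax)} φ(ax) dμ(a)` (with `A` sectionally trivial on
`I`) is real-analytic on all of `C(B(A,I),ℝ)`: it is analytic at every `ψ` and is given
around every `ψ` by its convergent Taylor series
`Θ̇(ψ+β) = Θ̇(ψ) + ∑_{n=1}^∞ (1/n!)·[φ ↦ Θ̇(ψ)(φ·βⁿ)]`. -/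
theorem generalized_ruelle_operator_analytic
    {M : Type*} [MetricSpace M] [CompactSpace M] [MeasurableSpace M] [BorelSpace M]
    (μ : Measure M) [IsFiniteMeasure μ]
    (A : M × M → ℝ) (hA : Continuous A) (I : Set ℝ) (hI : IsClosed I)
    (hsec : ∀ m : M, ∃ ε > (0 : ℝ), ∀ m' : M, dist m m' < ε →
      {a : M | A (a, m') ∈ I} = {a : M | A (a, m) ∈ I})
    [CompactSpace {z : ℕ → M // ∀ k : ℕ, A (z k, z (k + 1)) ∈ I}]
    (Θ : C({z : ℕ → M // ∀ k : ℕ, A (z k, z (k + 1)) ∈ I}, ℝ) →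
      C({z : ℕ → M // ∀ k : ℕ, A (z k, z (k + 1)) ∈ I}, ℝ) →L[ℝ]
        C({z : ℕ → M // ∀ k : ℕ, A (z k, z (k + 1)) ∈ I}, ℝ))
    (hΘ : ∀ ψ φ : C({z : ℕ → M // ∀ k : ℕ, A (z k, z (k + 1)) ∈ I}, ℝ),
      ∀ x : {z : ℕ → M // ∀ k : ℕ, A (z k, z (k + 1)) ∈ I},
        Θ ψ φ x = ∫ a in {a : M | A (a, x.1 0) ∈ I},
          (if ha : A (a, x.1 0) ∈ I then
            Real.exp (ψ (consMem A I x a ha)) * φ (consMem A I x a ha) else 0) ∂μ) :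
    (∀ ψ : C({z : ℕ → M // ∀ k : ℕ, A (z k, z (k + 1)) ∈ I}, ℝ), AnalyticAt ℝ Θ ψ) ∧
    ∀ ψ β : C({z : ℕ → M // ∀ k : ℕ, A (z k, z (k + 1)) ∈ I}, ℝ),
      HasSum (fun n : ℕ => ((n + 1).factorial : ℝ)⁻¹ •
          ((Θ ψ).comp
            ((ContinuousLinearMap.mul ℝ
              (C({z : ℕ → M // ∀ k : ℕ, A (z k, z (k + 1)) ∈ I}, ℝ))).flip (β ^ (n + 1)))))
        (Θ (ψ + β) - Θ ψ) :=
  generalized_ruelle_operator_analytic_general (μ := μ)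
    (fun m => (hI.preimage (hA.comp (Continuous.prodMk_left m))).measurableSet) hΘ
end
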